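/- Let y ∈ ℂ with Re(y) > 0 be fixed. Then there exists a constant C > 0 such that for all integers n ≥ 2, | ψ₁(2πin/y) + ψ₁(−2πin/y) − (1/2)(log²(2πin/y) + log²(−2πin/y)) + y/(4n) | ≤ C log(n)/n². In particular, the series Σ_{n=1}^∞ { ψ₁(2πin/y) + ψ₁(−2πin/y) − (1/2)(log²(2πin/y) + log²(−2πin/y)) + y/(4n) } converges absolutely. -/

import Mathlib

open Filter Topology MeasureTheory

noncomputable def eulerGamma : ℝ := Real.eulerMascheroniConstant

noncomputable def gamma1 : ℝ :=
  limUnder atTop (fun n : ℕ => ∑ j ∈ Finset.Icc 1 n, Real.log j / j - (Real.log n) ^ 2 / 2)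

noncomputable def psi1 (z : ℂ) : ℂ :=
  -(gamma1 : ℂ) - Complex.log z / z -
    ∑' n : ℕ, (Complex.log (((n : ℂ) + 1) + z) / (((n : ℂ) + 1) + z)
      - Complex.log ((n : ℂ) + 1) / ((n : ℂ) + 1))

noncomputable def psiTermN (y : ℂ) (n : ℕ) : ℂ :=
  psi1 (2 * (Real.pi : ℂ) * Complex.I * (n : ℂ) / y)
    + psi1 (-(2 * (Real.pi : ℂ) * Complex.I * (n : ℂ) / y))
    - (1/2) * ((Complex.log (2 * (Real.pi : ℂ) * Complex.I * (n : ℂ) / y)) ^ 2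
      + (Complex.log (-(2 * (Real.pi : ℂ) * Complex.I * (n : ℂ) / y))) ^ 2)
    + y / (4 * (n : ℂ))

/-!
By the trapezoidal rule on the segments from `z + k` to `z + k + 1`, the remainder
`ψ₁(z) - log² z / 2 + log z / (2 z)` is the sum over `k` of the quadrature errors of `log w / w`,
each at most `1 / 12` of the supremum of the second derivative `(2 log w - 3) / w ^ 3` over the
segment. Since `|z + t| ≥ cos (arg z / 2) (|z| + t)` for `t ≥ 0`, these errors add up to
`O(log |z| / |z|²)` along every ray other than the negative real axis. For `Re y > 0` the points
`± 2πin/y` lie on two such rays, and because `log (-z) = log z - πi` in the upper half plane the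
terms `-log z / (2 z)` at `z = 2πin/y` and at `-z` add up to `-πi / (2 z) = -y / (4 n)`.
-/

open Asymptotics

section Trapezoid

variable {E : Type*} [NormedAddCommGroup E] [NormedSpace ℝ E]

lemma norm_le_of_norm_hasDerivAt_le_sub_pow {g g' : ℝ → E} {a b C : ℝ} {n : ℕ} (hga : g a = 0)
    (hg : ∀ t ∈ Set.Icc a b, HasDerivAt g (g' t) t)
    (hg' : ∀ t ∈ Set.Icc a b, ‖g' t‖ ≤ C * (t - a) ^ n) :
    ∀ t ∈ Set.Icc a b, ‖g t‖ ≤ C / (n + 1) * (t - a) ^ (n + 1) := by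
  have hpow (t : ℝ) : HasDerivAt (fun t ↦ C / (n + 1) * (t - a) ^ (n + 1)) (C * (t - a) ^ n) t := by
    refine ((((hasDerivAt_id' t).sub_const a).fun_pow (n + 1)).const_mul
      (C / (n + 1))).congr_deriv ?_
    push_cast
    field_simp
  exact image_norm_le_of_norm_deriv_right_le_deriv_boundary
    (fun t ht ↦ (hg t ht).continuousAt.continuousWithinAt)
    (fun t ht ↦ (hg t (Set.Ico_subset_Icc_self ht)).hasDerivWithinAt) (by simp [hga]) hpow
    fun t ht ↦ hg' t (Set.Ico_subset_Icc_self ht)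

lemma norm_trapezoid_error_le {F f f' f'' : ℝ → E} {a b M : ℝ} (hab : a ≤ b)
    (hF : ∀ t ∈ Set.Icc a b, HasDerivAt F (f t) t)
    (hf : ∀ t ∈ Set.Icc a b, HasDerivAt f (f' t) t)
    (hf' : ∀ t ∈ Set.Icc a b, HasDerivAt f' (f'' t) t)
    (hM : ∀ t ∈ Set.Icc a b, ‖f'' t‖ ≤ M) :
    ‖F b - F a - ((b - a) / 2) • (f a + f b)‖ ≤ M * (b - a) ^ 3 / 12 := by
  -- As functions of the right endpoint, the error and its derivative both vanish at `a`.
  let error (t : ℝ) : E := F t - F a - ((t - a) / 2) • (f a + f t)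
  let error' (t : ℝ) : E := (1 / 2 : ℝ) • (f t - f a) - ((t - a) / 2) • f' t
  have hlin (t : ℝ) : HasDerivAt (fun t ↦ (t - a) / 2) (1 / 2) t :=
    ((hasDerivAt_id t).sub_const a).div_const 2
  have herror (t : ℝ) (ht : t ∈ Set.Icc a b) : HasDerivAt error (error' t) t := by
    refine (((hF t ht).sub_const (F a)).sub
      ((hlin t).smul ((hf t ht).const_add (f a)))).congr_deriv ?_
    simp only [error']
    module
  have herror' (t : ℝ) (ht : t ∈ Set.Icc a b) :
      HasDerivAt error' (-((t - a) / 2) • f'' t) t := by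
    refine ((((hf t ht).sub_const (f a)).const_smul (1 / 2 : ℝ)).sub
      ((hlin t).smul (hf' t ht))).congr_deriv ?_
    module
  have norm_error''_le (t : ℝ) (ht : t ∈ Set.Icc a b) :
      ‖-((t - a) / 2) • f'' t‖ ≤ M / 2 * (t - a) ^ 1 := by
    have hta : 0 ≤ (t - a) / 2 := by linarith [ht.1]
    rw [norm_smul, norm_neg, Real.norm_of_nonneg hta]
    linarith [mul_le_mul_of_nonneg_left (hM t ht) hta]
  have norm_error'_le :=
    norm_le_of_norm_hasDerivAt_le_sub_pow (by simp [error']) herror' norm_error''_le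
  have norm_error_le :=
    norm_le_of_norm_hasDerivAt_le_sub_pow (by simp [error]) herror norm_error'_le
  refine (norm_error_le b (Set.right_mem_Icc.2 hab)).trans_eq ?_
  norm_num
  ring

end Trapezoid

/-- The summand `log z / z` of the series defining `psi1`, with the principal branch of `log`. -/
noncomputable def logDiv (z : ℂ) : ℂ := Complex.log z / z

/-- The primitive `log² z / 2` of `logDiv` on the slit plane. -/
noncomputable def halfLogSq (z : ℂ) : ℂ := Complex.log z ^ 2 / 2

/-- The error of the trapezoidal rule for `logDiv` on the segment from `z` to `z + 1`. -/
noncomputable def logDivDefect (z : ℂ) : ℂ :=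
  halfLogSq (z + 1) - halfLogSq z - (logDiv z + logDiv (z + 1)) / 2

/-- The remainder of `psi1` after the two leading terms `log² z / 2 - log z / (2 z)` of its
Euler–Maclaurin expansion. -/
noncomputable def psi1Remainder (z : ℂ) : ℂ := psi1 z - (halfLogSq z - logDiv z / 2)

section Derivatives

variable {z : ℂ}

lemma hasDerivAt_halfLogSq (hz : z ∈ Complex.slitPlane) : HasDerivAt halfLogSq (logDiv z) z := by
  refine (((Complex.hasDerivAt_log hz).pow 2).div_const 2).congr_deriv ?_
  simp only [logDiv]
  field_simp
  norm_num

lemma hasDerivAt_logDiv (hz : z ∈ Complex.slitPlane) :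
    HasDerivAt logDiv ((1 - Complex.log z) / z ^ 2) z := by
  have hz0 := Complex.slitPlane_ne_zero hz
  refine ((Complex.hasDerivAt_log hz).div (hasDerivAt_id z) hz0).congr_deriv ?_
  simp only [id]
  field_simp

lemma hasDerivAt_one_sub_log_div_sq (hz : z ∈ Complex.slitPlane) :
    HasDerivAt (fun w ↦ (1 - Complex.log w) / w ^ 2) ((2 * Complex.log z - 3) / z ^ 3) z := by
  have hz0 := Complex.slitPlane_ne_zero hz
  refine (((Complex.hasDerivAt_log hz).const_sub 1).div (hasDerivAt_pow 2 z)
    (pow_ne_zero 2 hz0)).congr_deriv ?_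
  field_simp
  ring

lemma add_ofReal_mem_slitPlane (hz : z ∈ Complex.slitPlane) {t : ℝ} (ht : 0 ≤ t) :
    z + t ∈ Complex.slitPlane := by
  rw [Complex.mem_slitPlane_iff] at hz ⊢
  simpa using hz.imp_left fun hre ↦ by linarith

lemma norm_logDivDefect_le (hz : z ∈ Complex.slitPlane) {M : ℝ}
    (hM : ∀ t ∈ Set.Icc (0 : ℝ) 1, ‖(2 * Complex.log (z + t) - 3) / (z + t) ^ 3‖ ≤ M) :
    ‖logDivDefect z‖ ≤ M / 12 := by
  have hasDerivAt_line {f : ℂ → ℂ} {f' : ℂ} (t : ℝ) (h : HasDerivAt f f' (z + t)) :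
      HasDerivAt (fun s : ℝ ↦ f (z + s)) f' t :=
    (h.comp_const_add z (t : ℂ)).comp_ofReal
  have hslit (t : ℝ) (ht : t ∈ Set.Icc (0 : ℝ) 1) := add_ofReal_mem_slitPlane hz ht.1
  have herror := norm_trapezoid_error_le zero_le_one
    (fun t ht ↦ hasDerivAt_line t (hasDerivAt_halfLogSq (hslit t ht)))
    (fun t ht ↦ hasDerivAt_line t (hasDerivAt_logDiv (hslit t ht)))
    (fun t ht ↦ hasDerivAt_line t (hasDerivAt_one_sub_log_div_sq (hslit t ht))) hM
  convert! herror using 2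
  · simp only [logDivDefect, Complex.ofReal_zero, Complex.ofReal_one, add_zero, sub_zero,
      Complex.real_smul, Complex.ofReal_div, Complex.ofReal_ofNat]
    ring
  · ring

end Derivatives

section Sector

lemma cos_half_arg_mul_le_norm_add_ofReal (z : ℂ) (t : ℝ) :
    Real.cos (z.arg / 2) * (‖z‖ + t) ≤ ‖z + t‖ := by
  -- Project `z + t` onto the bisector of the angle between `z` and the positive real axis.
  have hbisector : ((z + t) * Complex.exp (-(z.arg / 2 : ℝ) * Complex.I)).re
      = Real.cos (z.arg / 2) * (‖z‖ + t) := by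
    have hz : z * Complex.exp (-(z.arg / 2 : ℝ) * Complex.I)
        = ‖z‖ * Complex.exp ((z.arg / 2 : ℝ) * Complex.I) := by
      nth_rw 1 [← Complex.norm_mul_exp_arg_mul_I z]
      rw [mul_assoc, ← Complex.exp_add]
      congr 2
      push_cast
      ring
    rw [add_mul, hz, Complex.add_re, Complex.re_ofReal_mul, Complex.re_ofReal_mul,
      ← Complex.ofReal_neg, Complex.exp_ofReal_mul_I_re, Complex.exp_ofReal_mul_I_re, Real.cos_neg]
    ring
  calc Real.cos (z.arg / 2) * (‖z‖ + t)
      = ((z + t) * Complex.exp (-(z.arg / 2 : ℝ) * Complex.I)).re := hbisector.symm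
    _ ≤ ‖(z + t) * Complex.exp (-(z.arg / 2 : ℝ) * Complex.I)‖ := Complex.re_le_norm _
    _ = ‖z + t‖ := by
      rw [norm_mul, ← Complex.ofReal_neg, Complex.norm_exp_ofReal_mul_I, mul_one]

variable {z : ℂ}

lemma cos_half_arg_pos (hz : z ∈ Complex.slitPlane) : 0 < Real.cos (z.arg / 2) := by
  have hlt : z.arg < Real.pi := (Complex.arg_le_pi z).lt_of_ne (Complex.slitPlane_arg_ne_pi hz)
  exact Real.cos_pos_of_mem_Ioo ⟨by linarith [Complex.neg_pi_lt_arg z], by linarith⟩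

lemma norm_log_le_abs_log_norm_add_pi (z : ℂ) : ‖Complex.log z‖ ≤ |Real.log ‖z‖| + Real.pi := by
  calc ‖Complex.log z‖ ≤ |(Complex.log z).re| + |(Complex.log z).im| :=
        Complex.norm_le_abs_re_add_abs_im _
    _ ≤ |Real.log ‖z‖| + Real.pi := by
        rw [Complex.log_re, Complex.log_im]
        gcongr
        exact Complex.abs_arg_le_pi z

lemma norm_two_mul_log_sub_three_le {u : ℂ} {c s : ℝ} (hc : 0 < c) (hc1 : c ≤ 1) (hs : 1 ≤ s)
    (hlower : c * s ≤ ‖u‖) (hupper : ‖u‖ ≤ s) :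
    ‖2 * Complex.log u - 3‖ ≤ 2 * (Real.log s + 6) / c := by
  have hs0 : 0 < s := by linarith
  have hlogs : 0 ≤ Real.log s := Real.log_nonneg hs
  have hcinv : 1 ≤ c⁻¹ := (one_le_inv₀ hc).2 hc1
  have hlogu : |Real.log ‖u‖| ≤ Real.log s + (c⁻¹ - 1) := by
    have hlogc : 1 - c⁻¹ ≤ Real.log c := Real.one_sub_inv_le_log_of_pos hc
    have hge : Real.log c + Real.log s ≤ Real.log ‖u‖ := by
      rw [← Real.log_mul hc.ne' hs0.ne']
      exact Real.log_le_log (by positivity) hlower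
    have hle : Real.log ‖u‖ ≤ Real.log s :=
      Real.log_le_log (lt_of_lt_of_le (by positivity) hlower) hupper
    rw [abs_le]
    constructor <;> linarith
  calc ‖2 * Complex.log u - 3‖ ≤ 2 * ‖Complex.log u‖ + 3 := by
        refine (norm_sub_le _ _).trans_eq ?_
        simp
    _ ≤ 2 * (Real.log s + 6 * c⁻¹) := by
        linarith [norm_log_le_abs_log_norm_add_pi u, Real.pi_lt_four]
    _ ≤ 2 * (Real.log s * c⁻¹ + 6 * c⁻¹) := by
        gcongr
        exact le_mul_of_one_le_right hlogs hcinv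
    _ = 2 * (Real.log s + 6) / c := by ring

lemma log_add_le_log_add_div {r t : ℝ} (hr : 0 < r) (ht : 0 ≤ t) :
    Real.log (r + t) ≤ Real.log r + t / r := by
  have hfactor : r + t = r * (1 + t / r) := by field_simp
  have hpos : 0 < 1 + t / r := by positivity
  rw [hfactor, Real.log_mul hr.ne' hpos.ne']
  linarith [Real.log_le_sub_one_of_pos hpos]

lemma norm_second_deriv_logDiv_le (hz : z ∈ Complex.slitPlane) (hz1 : 1 ≤ ‖z‖) {t : ℝ}
    (ht : 0 ≤ t) :
    ‖(2 * Complex.log (z + t) - 3) / (z + t) ^ 3‖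
      ≤ 2 * (Real.log ‖z‖ + 6) / (Real.cos (z.arg / 2) ^ 4 * ‖z‖) / (‖z‖ + t) ^ 2 := by
  set r := ‖z‖
  set c := Real.cos (z.arg / 2)
  have hc : 0 < c := cos_half_arg_pos hz
  have hr0 : 0 < r := by linarith
  have hlogr : 0 ≤ Real.log r := Real.log_nonneg hz1
  have hlower : c * (r + t) ≤ ‖z + t‖ := cos_half_arg_mul_le_norm_add_ofReal z t
  have hupper : ‖z + t‖ ≤ r + t :=
    (norm_add_le _ _).trans_eq (by rw [Complex.norm_of_nonneg ht])
  have hnum := norm_two_mul_log_sub_three_le hc (Real.cos_le_one _) (by linarith) hlower hupper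
  have hlog : Real.log (r + t) + 6 ≤ (Real.log r + 6) * ((r + t) / r) := by
    have htr : 0 ≤ t / r := by positivity
    have hsplit : (r + t) / r = 1 + t / r := by field_simp
    rw [hsplit]
    nlinarith [log_add_le_log_add_div hr0 ht]
  calc ‖(2 * Complex.log (z + t) - 3) / (z + t) ^ 3‖
      = ‖2 * Complex.log (z + t) - 3‖ / ‖z + t‖ ^ 3 := by rw [norm_div, norm_pow]
    _ ≤ (2 * ((Real.log r + 6) * ((r + t) / r)) / c) / (c * (r + t)) ^ 3 := by
        gcongr
        exact hnum.trans (by gcongr)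
    _ = 2 * (Real.log r + 6) / (c ^ 4 * r) / (r + t) ^ 2 := by field_simp

lemma sum_range_inv_add_sq_le {r : ℝ} (hr : 1 ≤ r) (N : ℕ) :
    ∑ k ∈ Finset.range N, ((r + k) ^ 2)⁻¹ ≤ 2 / r := by
  calc ∑ k ∈ Finset.range N, ((r + k) ^ 2)⁻¹
      ≤ ∑ k ∈ Finset.range N, (2 / (r + k) - 2 / (r + (k + 1 : ℕ))) := by
        refine Finset.sum_le_sum fun k _ ↦ ?_
        have hrk : 1 ≤ r + k := by linarith [(k.cast_nonneg : (0 : ℝ) ≤ k)]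
        have htelescope : 2 / (r + k) - 2 / (r + (k + 1 : ℕ)) = 2 / ((r + k) * (r + k + 1)) := by
          push_cast
          field_simp
          ring
        rw [htelescope, inv_eq_one_div, div_le_div_iff₀ (by positivity) (by positivity)]
        nlinarith [hrk]
    _ = 2 / r - 2 / (r + N) := by
        rw [Finset.sum_range_sub' fun k : ℕ ↦ 2 / (r + k), Nat.cast_zero, add_zero]
    _ ≤ 2 / r := sub_le_self _ (by positivity)

lemma sum_range_norm_logDivDefect_le (hz : z ∈ Complex.slitPlane) (hz1 : 1 ≤ ‖z‖) (N : ℕ) :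
    ∑ k ∈ Finset.range N, ‖logDivDefect (z + k)‖
      ≤ (Real.log ‖z‖ + 6) / (3 * Real.cos (z.arg / 2) ^ 4 * ‖z‖ ^ 2) := by
  set r := ‖z‖
  set c := Real.cos (z.arg / 2)
  have hc : 0 < c := cos_half_arg_pos hz
  have hlogr : 0 ≤ Real.log r := Real.log_nonneg hz1
  have hdefect (k : ℕ) : ‖logDivDefect (z + k)‖
      ≤ (Real.log r + 6) / (6 * c ^ 4 * r) * ((r + k) ^ 2)⁻¹ := by
    have hbound : ∀ t ∈ Set.Icc (0 : ℝ) 1,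
        ‖(2 * Complex.log (z + k + t) - 3) / (z + k + t) ^ 3‖
          ≤ 2 * (Real.log r + 6) / (c ^ 4 * r) / (r + k) ^ 2 := by
      intro t ht
      have h := norm_second_deriv_logDiv_le hz hz1 (add_nonneg k.cast_nonneg ht.1)
      push_cast at h
      rw [← add_assoc] at h
      refine h.trans ?_
      gcongr
      linarith [ht.1]
    have hslit : z + k ∈ Complex.slitPlane := mod_cast add_ofReal_mem_slitPlane hz k.cast_nonneg
    refine (norm_logDivDefect_le hslit hbound).trans_eq ?_
    field_simp
    ring
  calc ∑ k ∈ Finset.range N, ‖logDivDefect (z + k)‖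
      ≤ ∑ k ∈ Finset.range N, (Real.log r + 6) / (6 * c ^ 4 * r) * ((r + k) ^ 2)⁻¹ :=
        Finset.sum_le_sum fun k _ ↦ hdefect k
    _ ≤ (Real.log r + 6) / (6 * c ^ 4 * r) * (2 / r) := by
        rw [← Finset.mul_sum]
        gcongr
        exact sum_range_inv_add_sq_le hz1 N
    _ = (Real.log r + 6) / (3 * c ^ 4 * r ^ 2) := by
        field_simp
        ring

end Sector

section LogAsymptotics

variable (z : ℂ)

lemma inv_ofReal_add_isBigO : (fun x : ℝ ↦ ((x : ℂ) + z)⁻¹) =O[atTop] fun x ↦ x⁻¹ := by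
  have hz : (fun _ : ℝ ↦ z) =o[atTop] fun x : ℝ ↦ (x : ℂ) :=
    isLittleO_const_left.2 <| Or.inr <| by
      simpa [Function.comp_def] using tendsto_abs_atTop_atTop
  have hx : (fun x : ℝ ↦ x) =O[atTop] fun x : ℝ ↦ (x : ℂ) + z :=
    (IsBigO.of_norm_right (by simpa using (isBigO_refl (fun x : ℝ ↦ x) atTop).norm_right)).trans
      hz.right_isBigO_add'
  refine hx.inv_rev ?_
  filter_upwards [eventually_ne_atTop 0] with x hx0 h using absurd h hx0

lemma log_ofReal_add_sub_log_isBigO :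
    (fun x : ℝ ↦ Complex.log (x + z) - Complex.log x) =O[atTop] fun x ↦ x⁻¹ := by
  have hdiv : Tendsto (fun x : ℝ ↦ 1 + z / x) atTop (𝓝 1) := by
    simpa [div_eq_mul_inv] using
      (tendsto_inv_atTop_zero.ofReal.const_mul z).const_add (1 : ℂ)
  have hlog : (fun x : ℝ ↦ Complex.log (1 + z / x)) =O[atTop] fun x : ℝ ↦ z / x := by
    simpa [Function.comp_def] using
      (Complex.hasDerivAt_log Complex.one_mem_slitPlane).isBigO_sub.comp_tendsto hdiv
  have hz : (fun x : ℝ ↦ z / x) =O[atTop] fun x ↦ x⁻¹ := by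
    refine IsBigO.of_bound ‖z‖ (Eventually.of_forall fun x ↦ ?_)
    simp [div_eq_mul_inv]
  refine (hlog.trans hz).congr' ?_ .rfl
  filter_upwards [eventually_gt_atTop 0, hdiv.eventually_ne one_ne_zero] with x hx hne
  have hx0 : (x : ℂ) ≠ 0 := mod_cast hx.ne'
  have hfactor : (x : ℂ) + z = x * (1 + z / x) := by field_simp
  rw [hfactor, Complex.log_ofReal_mul hx hne, Complex.ofReal_log hx.le, add_sub_cancel_left]

lemma log_ofReal_isBigO : (fun x : ℝ ↦ Complex.log x) =O[atTop] Real.log := by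
  refine IsBigO.of_bound 1 ?_
  filter_upwards [eventually_ge_atTop 0] with x hx
  rw [← Complex.ofReal_log hx, Complex.norm_real, one_mul]

lemma log_ofReal_add_isBigO : (fun x : ℝ ↦ Complex.log (x + z)) =O[atTop] Real.log := by
  have hinv : (fun x : ℝ ↦ x⁻¹) =O[atTop] Real.log :=
    (tendsto_inv_atTop_zero.isBigO_one ℝ).trans Real.isLittleO_const_log_atTop.isBigO
  simpa using ((log_ofReal_add_sub_log_isBigO z).trans hinv).add log_ofReal_isBigO

lemma logDiv_ofReal_add_isBigO :
    (fun x : ℝ ↦ logDiv (x + z)) =O[atTop] fun x ↦ Real.log x / x :=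
  (log_ofReal_add_isBigO z).mul (inv_ofReal_add_isBigO z)

lemma halfLogSq_ofReal_add_sub_isBigO :
    (fun x : ℝ ↦ halfLogSq (x + z) - halfLogSq x) =O[atTop] fun x ↦ Real.log x / x := by
  have hsum : (fun x : ℝ ↦ (Complex.log (x + z) + Complex.log x) / 2) =O[atTop] Real.log := by
    simpa only [div_eq_inv_mul] using
      ((log_ofReal_add_isBigO z).add log_ofReal_isBigO).const_mul_left 2⁻¹
  refine (hsum.mul (log_ofReal_add_sub_log_isBigO z)).congr_left fun x ↦ ?_
  simp only [halfLogSq]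
  ring

lemma logDiv_ofReal_add_sub_isBigO :
    (fun x : ℝ ↦ logDiv (x + z) - logDiv x) =O[atTop] fun x ↦ Real.log x / x ^ 2 := by
  have hlogdiff : (fun x : ℝ ↦ (Complex.log (x + z) - Complex.log x) * ((x : ℂ) + z)⁻¹)
      =O[atTop] fun x ↦ Real.log x / x ^ 2 := by
    have hone : (fun _ : ℝ ↦ (1 : ℂ)) =O[atTop] Real.log :=
      (isBigO_const_const 1 one_ne_zero atTop).trans
        (Real.isLittleO_const_log_atTop (c := 1)).isBigO
    refine (hone.mul ((log_ofReal_add_sub_log_isBigO z).mul (inv_ofReal_add_isBigO z))).congr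
      (fun x ↦ one_mul _) fun x ↦ ?_
    ring
  have hinvdiff : (fun x : ℝ ↦ z * (logDiv x * ((x : ℂ) + z)⁻¹))
      =O[atTop] fun x ↦ Real.log x / x ^ 2 := by
    have hlogDiv : (fun x : ℝ ↦ logDiv x) =O[atTop] fun x ↦ Real.log x / x := by
      simpa using logDiv_ofReal_add_isBigO 0
    refine ((hlogDiv.mul (inv_ofReal_add_isBigO z)).const_mul_left z).congr_right fun x ↦ ?_
    ring
  refine (hlogdiff.sub hinvdiff).congr' ?_ .rfl
  have hne : ∀ᶠ x : ℝ in atTop, (x : ℂ) + z ≠ 0 := by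
    filter_upwards [eventually_gt_atTop (-z.re)] with x hx h
    have hre : x + z.re = 0 := by simpa using congrArg Complex.re h
    linarith
  filter_upwards [eventually_ne_atTop 0, hne] with x hx hxz
  have hx0 : (x : ℂ) ≠ 0 := mod_cast hx
  simp only [logDiv]
  field_simp
  ring

lemma summable_log_div_natCast_sq : Summable fun n : ℕ ↦ Real.log n / (n : ℝ) ^ 2 := by
  have hlog : (fun x : ℝ ↦ Real.log x / x ^ 2) =O[atTop] fun x ↦ x ^ (-(3 / 2) : ℝ) := by
    refine ((isLittleO_log_rpow_atTop one_half_pos).isBigO.mul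
      (isBigO_refl (fun x : ℝ ↦ (x ^ 2)⁻¹) atTop)).congr' .rfl ?_
    filter_upwards [eventually_gt_atTop 0] with x hx
    rw [← Real.rpow_natCast, ← Real.rpow_neg hx.le, ← Real.rpow_add hx]
    norm_num
  exact summable_of_isBigO_nat (Real.summable_nat_rpow.2 (by norm_num)) hlog.natCast_atTop

lemma tendsto_log_div_natCast : Tendsto (fun n : ℕ ↦ Real.log n / n) atTop (𝓝 0) :=
  Real.isLittleO_log_id_atTop.tendsto_div_nhds_zero.comp tendsto_natCast_atTop_atTop

lemma tendsto_logDiv_natCast_add : Tendsto (fun n : ℕ ↦ logDiv (n + z)) atTop (𝓝 0) := by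
  have h := (logDiv_ofReal_add_isBigO z).natCast_atTop.trans_tendsto tendsto_log_div_natCast
  simpa only [Complex.ofReal_natCast] using h

lemma tendsto_halfLogSq_natCast_add_sub :
    Tendsto (fun n : ℕ ↦ halfLogSq (n + z) - halfLogSq n) atTop (𝓝 0) := by
  have h := (halfLogSq_ofReal_add_sub_isBigO z).natCast_atTop.trans_tendsto tendsto_log_div_natCast
  simpa only [Complex.ofReal_natCast] using h

lemma summable_logDiv_natCast_add_sub :
    Summable fun n : ℕ ↦ logDiv (n + 1 + z) - logDiv (n + 1) := by
  have h := summable_of_isBigO_nat summable_log_div_natCast_sq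
    (logDiv_ofReal_add_sub_isBigO z).natCast_atTop
  simp only [Complex.ofReal_natCast] at h
  simpa only [Nat.cast_add_one] using (summable_nat_add_iff 1).2 h

end LogAsymptotics

section EulerMaclaurin

lemma sum_range_logDivDefect (z : ℂ) (N : ℕ) :
    ∑ k ∈ Finset.range N, logDivDefect (z + k)
      = halfLogSq (N + z) - halfLogSq z - ∑ k ∈ Finset.range N, logDiv (z + k)
        - (logDiv (N + z) - logDiv z) / 2 := by
  induction N with
  | zero => simp
  | succ N ih =>
    rw [Finset.sum_range_succ, Finset.sum_range_succ, ih, logDivDefect]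
    push_cast
    rw [add_comm z N, add_right_comm]
    ring

lemma ofReal_sum_log_div_sub_log_sq (N : ℕ) :
    ((∑ j ∈ Finset.Icc 1 N, Real.log j / j - Real.log N ^ 2 / 2 : ℝ) : ℂ)
      = ∑ k ∈ Finset.range N, logDiv (k + 1) - halfLogSq N := by
  have hsum : ∑ j ∈ Finset.Icc 1 N, logDiv j = ∑ k ∈ Finset.range N, logDiv (k + 1) := by
    rw [← Finset.Ico_add_one_right_eq_Icc, Finset.sum_Ico_eq_sum_range, Nat.add_sub_cancel]
    exact Finset.sum_congr rfl fun k _ ↦ by rw [Nat.cast_add, Nat.cast_one, add_comm]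
  rw [← hsum]
  push_cast
  simp only [logDiv, halfLogSq]

lemma summable_logDivDefect_one_add : Summable fun k : ℕ ↦ logDivDefect (1 + k) :=
  (summable_of_sum_range_le (fun _ ↦ norm_nonneg _)
    (sum_range_norm_logDivDefect_le Complex.one_mem_slitPlane (by simp))).of_norm

lemma tendsto_gamma1 :
    Tendsto (fun n : ℕ ↦ ∑ j ∈ Finset.Icc 1 n, Real.log j / j - Real.log n ^ 2 / 2) atTop
      (𝓝 gamma1) := by
  have hdefect := summable_logDivDefect_one_add.hasSum.tendsto_sum_nat
  have hcomplex := ((tendsto_halfLogSq_natCast_add_sub 1).sub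
    ((tendsto_logDiv_natCast_add 1).div_const 2)).sub hdefect
  refine tendsto_nhds_limUnder ⟨_, ((Complex.continuous_re.tendsto _).comp hcomplex).congr
    fun N ↦ ?_⟩
  rw [← Complex.ofReal_re (∑ j ∈ Finset.Icc 1 N, Real.log j / j - Real.log N ^ 2 / 2),
    ofReal_sum_log_div_sub_log_sq, Function.comp_apply, sum_range_logDivDefect]
  simp only [add_comm (1 : ℂ), show logDiv 1 = 0 by simp [logDiv],
    show halfLogSq 1 = 0 by simp [halfLogSq]]
  congr 1
  ring

lemma tendsto_sum_logDivDefect (z : ℂ) :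
    Tendsto (fun N : ℕ ↦ ∑ k ∈ Finset.range N, logDivDefect (z + k)) atTop
      (𝓝 (psi1Remainder z)) := by
  have hpsi := (summable_logDiv_natCast_add_sub z).hasSum.tendsto_sum_nat
  have hlim := ((((tendsto_halfLogSq_natCast_add_sub z).sub tendsto_gamma1.ofReal).sub hpsi).add
    ((tendsto_logDiv_natCast_add z).div_const 2)).sub_const (halfLogSq z + logDiv z / 2)
  have hvalue : psi1Remainder z = 0 - gamma1
      - ∑' n : ℕ, (logDiv (n + 1 + z) - logDiv (n + 1)) + 0 / 2
      - (halfLogSq z + logDiv z / 2) := by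
    simp only [psi1Remainder, psi1, logDiv]
    ring
  rw [hvalue]
  refine hlim.congr fun N ↦ ?_
  have hshift : ∑ k ∈ Finset.range N, logDiv (k + 1 + z)
      = ∑ k ∈ Finset.range N, logDiv (z + k) + logDiv (N + z) - logDiv z := by
    have h := (Finset.sum_range_succ' (fun k : ℕ ↦ logDiv (z + k)) N).symm.trans
      (Finset.sum_range_succ _ N)
    rw [← add_comm z N, ← h]
    simp only [Nat.cast_add_one, Nat.cast_zero, add_zero, add_sub_cancel_right]
    exact Finset.sum_congr rfl fun k _ ↦ congrArg logDiv (by ring)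
  rw [ofReal_sum_log_div_sub_log_sq, Finset.sum_sub_distrib, hshift, sum_range_logDivDefect]
  ring

theorem norm_psi1Remainder_le {z : ℂ} (hz : z ∈ Complex.slitPlane) (hz1 : 1 ≤ ‖z‖) :
    ‖psi1Remainder z‖
      ≤ (Real.log ‖z‖ + 6) / (3 * Real.cos (z.arg / 2) ^ 4 * ‖z‖ ^ 2) :=
  le_of_tendsto (tendsto_sum_logDivDefect z).norm <| Eventually.of_forall fun N ↦
    (norm_sum_le _ _).trans (sum_range_norm_logDivDefect_le hz hz1 N)

lemma psi1Remainder_natCast_mul_isBigO {w : ℂ} (hw : w ∈ Complex.slitPlane) :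
    (fun n : ℕ ↦ psi1Remainder (n * w)) =O[atTop] fun n ↦ Real.log n / (n : ℝ) ^ 2 := by
  have hw0 : 0 < ‖w‖ := norm_pos_iff.2 (Complex.slitPlane_ne_zero hw)
  suffices h : (fun x : ℝ ↦ psi1Remainder (x * w)) =O[atTop] fun x ↦ Real.log x / x ^ 2 by
    simpa only [Complex.ofReal_natCast] using h.natCast_atTop
  have hlog : (fun x ↦ Real.log (x * ‖w‖) + 6) =O[atTop] Real.log :=
    (Real.isBigO_log_mul_const_log_atTop ‖w‖).add Real.isLittleO_const_log_atTop.isBigO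
  have hbound : (fun x ↦ (3 * Real.cos (w.arg / 2) ^ 4 * ‖w‖ ^ 2)⁻¹
      * ((Real.log (x * ‖w‖) + 6) * (x ^ 2)⁻¹)) =O[atTop] fun x ↦ Real.log x / x ^ 2 :=
    (hlog.mul (isBigO_refl (fun x ↦ (x ^ 2)⁻¹) atTop)).const_mul_left _
  refine IsBigO.trans (.of_norm_eventuallyLE ?_) hbound
  filter_upwards [eventually_gt_atTop 0, eventually_ge_atTop ‖w‖⁻¹] with x hx hxw
  have hnorm : ‖x * w‖ = x * ‖w‖ := by rw [norm_mul, Complex.norm_of_nonneg hx.le]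
  have hslit : x * w ∈ Complex.slitPlane := by
    rw [Complex.mem_slitPlane_iff_arg] at hw ⊢
    exact ⟨by rw [Complex.arg_real_mul w hx]; exact hw.1,
      mul_ne_zero (mod_cast hx.ne') hw.2⟩
  have hle := norm_psi1Remainder_le hslit (by rw [hnorm]; rwa [inv_le_iff_one_le_mul₀ hw0] at hxw)
  rw [Complex.arg_real_mul w hx, hnorm] at hle
  refine hle.trans_eq ?_
  rw [mul_pow]
  ring

end EulerMaclaurin

section Term

lemma logDiv_add_logDiv_neg {z : ℂ} (hz : 0 < z.im) :
    logDiv z + logDiv (-z) = Real.pi * Complex.I / z := by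
  have hlog : Complex.log (-z) = Complex.log z - Real.pi * Complex.I := by
    simp only [Complex.log, norm_neg, Complex.arg_neg_eq_arg_sub_pi_of_im_pos hz]
    push_cast
    ring
  rw [logDiv, logDiv, hlog]
  ring

lemma im_two_pi_I_div_pos {y : ℂ} (hy : 0 < y.re) : 0 < (2 * Real.pi * Complex.I / y).im := by
  have hy0 : y ≠ 0 := fun h ↦ by simp [h] at hy
  have hnormSq : 0 < Complex.normSq y := Complex.normSq_pos.2 hy0
  simp only [Complex.div_im, Complex.mul_re, Complex.mul_im, Complex.re_ofNat, Complex.im_ofNat,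
    Complex.ofReal_re, Complex.ofReal_im, Complex.I_re, Complex.I_im]
  norm_num
  positivity

lemma psiTermN_eq_add_psi1Remainder {y : ℂ} (hy : 0 < y.re) {n : ℕ} (hn : n ≠ 0) :
    psiTermN y n = psi1Remainder (n * (2 * Real.pi * Complex.I / y))
      + psi1Remainder (n * -(2 * Real.pi * Complex.I / y)) := by
  have hy0 : y ≠ 0 := fun h ↦ by simp [h] at hy
  have hn0 : (n : ℂ) ≠ 0 := mod_cast hn
  have hpi : (Real.pi : ℂ) ≠ 0 := mod_cast Real.pi_ne_zero
  set z := 2 * (Real.pi : ℂ) * Complex.I * n / y with hz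
  have hzw : n * (2 * Real.pi * Complex.I / y) = z := by rw [hz]; ring
  have him : 0 < z.im := by
    rw [← hzw, ← Complex.ofReal_natCast, Complex.im_ofReal_mul]
    exact mul_pos (by positivity) (im_two_pi_I_div_pos hy)
  have hcorrection : y / (4 * n) = (logDiv z + logDiv (-z)) / 2 := by
    rw [logDiv_add_logDiv_neg him, hz]
    field_simp
    norm_num
  rw [psiTermN, mul_neg, hzw, hcorrection]
  simp only [psi1Remainder, halfLogSq]
  ring

lemma psiTermN_isBigO {y : ℂ} (hy : 0 < y.re) :
    psiTermN y =O[atTop] fun n : ℕ ↦ Real.log n / (n : ℝ) ^ 2 := by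
  have him := im_two_pi_I_div_pos hy
  have hpos := psi1Remainder_natCast_mul_isBigO (Complex.mem_slitPlane_iff.2 (Or.inr him.ne'))
  have hneg := psi1Remainder_natCast_mul_isBigO (w := -(2 * Real.pi * Complex.I / y))
    (Or.inr (by simpa using him.ne'))
  refine (hpos.add hneg).congr' ?_ .rfl
  filter_upwards [eventually_ne_atTop 0] with n hn
    using (psiTermN_eq_add_psi1Remainder hy hn).symm

end Term

theorem stmt2 (y : ℂ) (hy : 0 < y.re) :
    (∃ C > 0, ∀ n : ℕ, 2 ≤ n →
      ‖psiTermN y n‖ ≤ C * Real.log n / (n : ℝ) ^ 2) ∧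
    Summable (fun n : ℕ => ‖psiTermN y (n + 1)‖) := by
  have hO := psiTermN_isBigO hy
  constructor
  · obtain ⟨C, hC, hbound⟩ := bound_of_isBigO_nat_atTop hO
    refine ⟨C, hC, fun n hn ↦ ?_⟩
    have hlog : 0 < Real.log n := Real.log_pos (mod_cast hn)
    have hpos : 0 < Real.log n / (n : ℝ) ^ 2 := by positivity
    rw [mul_div_assoc, ← Real.norm_of_nonneg hpos.le]
    exact hbound hpos.ne'
  · exact (summable_nat_add_iff 1).2 (summable_of_isBigO_nat summable_log_div_natCast_sq hO).norm
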